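/- (Leibniz Type Rule II.) Let 0 < α < 1, 0 < β ≤ 1, and set ξ := (1−β)(1−α). Let a < b, Ψ : ℝ → ℝ strictly increasing and continuously differentiable on [a,b] with Ψ'(t) > 0 for all t ∈ [a,b]. Suppose f = h ∘ Ψ and g = w ∘ Ψ with h, w : ℝ → ℝ real-analytic with everywhere-convergent power series, and write f⁽ᵐ⁾(x) := h⁽ᵐ⁾(Ψ(x)). Then for every x ∈ (a,b): (^{H}D^{α,β;Ψ}(f·g))(x) = Σ_{m=0}^∞ binom(α, m) f⁽ᵐ⁾(x) (^{H}D^{α−m,β;Ψ} g)(x) + Σ_{k=0}^∞ binom(−ξ, k) (I^{ξ+k;Ψ}g)(a) (f⁽ᵏ⁾(x) − f⁽ᵏ⁾(a)) (Ψ(x) − Ψ(a))^{−(α+ξ)} / Γ(β(1−α)), where (I^{γ;Ψ}g)(a) := 0 for γ > 0 and := g(a) for γ = 0, all series converging. -/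

import Mathlib

open Real

/-- Generalized binomial coefficient `binom(γ, n) = γ(γ-1)⋯(γ-n+1)/n!`. -/
noncomputable def genBinom (γ : ℝ) (n : ℕ) : ℝ :=
  (∏ i ∈ Finset.range n, (γ - (i : ℝ))) / (n.factorial : ℝ)

/-- Ψ-Riemann–Liouville fractional integral of order `α` with base point `a`;
by convention the order-0 integral is the identity. -/
noncomputable def psiI (a : ℝ) (Ψ f : ℝ → ℝ) (α : ℝ) (x : ℝ) : ℝ :=
  if α = 0 then f x
  else (Real.Gamma α)⁻¹ * ∫ t in a..x, deriv Ψ t * (Ψ x - Ψ t) ^ (α - 1) * f t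

/-- Ψ-Riemann–Liouville fractional derivative of order `γ` (for `γ ≤ 0` it is the
fractional integral of order `-γ`, the order-0 case being the identity). -/
noncomputable def psiRLD (a : ℝ) (Ψ f : ℝ → ℝ) (γ : ℝ) (x : ℝ) : ℝ :=
  if γ ≤ 0 then psiI a Ψ f (-γ) x
  else (deriv Ψ x)⁻¹ * deriv (fun y => psiI a Ψ f (1 - γ) y) x

/-- Ψ-Caputo fractional derivative of order `γ` (for `γ ≤ 0` it is the
fractional integral of order `-γ`). -/
noncomputable def psiCD (a : ℝ) (Ψ f : ℝ → ℝ) (γ : ℝ) (x : ℝ) : ℝ :=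
  if γ ≤ 0 then psiI a Ψ f (-γ) x
  else psiI a Ψ (fun t => (deriv Ψ t)⁻¹ * deriv f t) (1 - γ) x

/-- Ψ-Hilfer fractional derivative of order `α` and type `β`. -/
noncomputable def psiHD (a : ℝ) (Ψ f : ℝ → ℝ) (α β : ℝ) (x : ℝ) : ℝ :=
  psiI a Ψ
    (fun y => (deriv Ψ y)⁻¹ * deriv (fun z => psiI a Ψ f ((1 - β) * (1 - α)) z) y)
    (β * (1 - α)) x

/-- Classical Riemann–Liouville fractional integral with base point `a`. -/
noncomputable def rlI (a : ℝ) (α : ℝ) (f : ℝ → ℝ) (x : ℝ) : ℝ :=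
  if α = 0 then f x
  else (Real.Gamma α)⁻¹ * ∫ t in a..x, (x - t) ^ (α - 1) * f t

/-- Classical Riemann–Liouville fractional derivative (fractional integral for `γ ≤ 0`). -/
noncomputable def rlD (a : ℝ) (γ : ℝ) (f : ℝ → ℝ) (x : ℝ) : ℝ :=
  if γ ≤ 0 then rlI a (-γ) f x
  else deriv (fun y => rlI a (1 - γ) f y) x

/-- Classical Caputo fractional derivative (fractional integral for `γ ≤ 0`). -/
noncomputable def capD (a : ℝ) (γ : ℝ) (f : ℝ → ℝ) (x : ℝ) : ℝ :=
  if γ ≤ 0 then rlI a (-γ) f x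
  else rlI a (1 - γ) (deriv f) x

/-- Classical Hilfer fractional derivative of order `α` and type `β`. -/
noncomputable def hilD (a : ℝ) (α β : ℝ) (f : ℝ → ℝ) (x : ℝ) : ℝ :=
  rlI a (β * (1 - α))
    (fun y => deriv (fun z => rlI a ((1 - β) * (1 - α)) f z) y) x

/-- Hadamard fractional integral with base point `a`. -/
noncomputable def hadI (a : ℝ) (α : ℝ) (f : ℝ → ℝ) (x : ℝ) : ℝ :=
  if α = 0 then f x
  else (Real.Gamma α)⁻¹ * ∫ t in a..x, (Real.log x - Real.log t) ^ (α - 1) * f t / t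

/-- Caputo–Hadamard fractional derivative (Hadamard fractional integral for `γ ≤ 0`). -/
noncomputable def chD (a : ℝ) (γ : ℝ) (f : ℝ → ℝ) (x : ℝ) : ℝ :=
  if γ ≤ 0 then hadI a (-γ) f x
  else hadI a (1 - γ) (fun t => t * deriv f t) x

/-- `h` is real-analytic with a power series converging on all of `ℝ`. -/
def EntireReal (h : ℝ → ℝ) : Prop :=
  ∃ p : FormalMultilinearSeries ℝ ℝ ℝ, HasFPowerSeriesOnBall h p 0 ⊤

/-!
Since `(1/Ψ') d/dx` is differentiation with respect to `u = Ψ x`, substituting `u = Ψ t` reduces the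
rule to the classical Hilfer derivative `hilD`. There, write `F = F x + (t - x) q(t)` with `q` the
difference quotient of `F` at `x`. On a `C¹` function `D^{α,β}` is `I^{1-α}` of the derivative plus
a boundary term, so the product rule and the semigroup property give
`D^{α,β} ((t - x) q G) = α I^{1-α} (q G) + boundary term` at `x`. Expanding `q` in powers of `t - x`
turns the right-hand side into the series, because `(x - t) ^ (-α) (t - x) ^ m` is up to sign the
kernel of `I^{1-α+m}`, and `I^{1-α+m} G = D^{α,β} (I^{m+1} G)`: primitives vanish at the base point,
so they have no boundary term. All terms `k ≥ 1` of the second series vanish; its term `k = 0` is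
the boundary term, nonzero only when `(1 - β) (1 - α) = 0`.
-/

open MeasureTheory Set Filter Topology

section Binomial

theorem genBinom_zero (γ : ℝ) : genBinom γ 0 = 1 := by
  simp [genBinom]

theorem genBinom_succ_mul (γ : ℝ) (n : ℕ) :
    genBinom γ (n + 1) * (n + 1) = γ * genBinom (γ - 1) n := by
  have hprod : ∏ i ∈ Finset.range n, (γ - ((i + 1 : ℕ) : ℝ)) =
      ∏ i ∈ Finset.range n, (γ - 1 - i) :=
    Finset.prod_congr rfl fun i _ => by push_cast; ring
  rw [genBinom, genBinom, Finset.prod_range_succ', hprod, Nat.factorial_succ]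
  push_cast
  field_simp
  ring

theorem genBinom_neg_mul_factorial {ν : ℝ} (hν : 0 < ν) (n : ℕ) :
    genBinom (-ν) n * n.factorial = (-1) ^ n * (Gamma (ν + n) / Gamma ν) := by
  rw [genBinom, div_mul_cancel₀ _ (by positivity)]
  induction n with
  | zero => simp [(Gamma_pos_of_pos hν).ne']
  | succ n ih =>
    rw [Finset.prod_range_succ, ih, Nat.cast_succ, ← add_assoc, Gamma_add_one (by positivity)]
    ring

end Binomial

section Entire

theorem EntireReal.analyticOnNhd {h : ℝ → ℝ} (hh : EntireReal h) : AnalyticOnNhd ℝ h univ := by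
  obtain ⟨p, hp⟩ := hh
  simpa using hp.analyticOnNhd

theorem EntireReal.contDiff {h : ℝ → ℝ} (hh : EntireReal h) {n : WithTop ℕ∞} :
    ContDiff ℝ n h :=
  hh.analyticOnNhd.contDiff

theorem EntireReal.hasSum_taylor {h : ℝ → ℝ} (hh : EntireReal h) (x t : ℝ) :
    HasSum (fun n : ℕ => iteratedDeriv n h x / n.factorial * (t - x) ^ n) (h t) := by
  obtain ⟨p, hp⟩ := hh
  have hx := hp.changeOrigin (y := x) (by simp)
  rw [zero_add, show (⊤ : ENNReal) - ‖x‖₊ = ⊤ by simp] at hx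
  rw [hx.hasFPowerSeriesAt.eq_formalMultilinearSeries
    hx.analyticAt.hasFPowerSeriesAt] at hx
  simpa [FormalMultilinearSeries.ofScalars_apply_eq, mul_comm] using
    hx.hasSum_sub (y := t) (by simp)

theorem EntireReal.hasSum_dslope {h : ℝ → ℝ} (hh : EntireReal h) (x t : ℝ) :
    HasSum (fun n : ℕ => iteratedDeriv (n + 1) h x / (n + 1).factorial * (t - x) ^ n)
      (dslope h x t) := by
  rcases eq_or_ne t x with rfl | htx
  · rw [dslope_same]
    convert hasSum_single 0 ?_ using 1
    · simp
    · simp +contextual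
  · have hne : t - x ≠ 0 := sub_ne_zero.2 htx
    have htail := ((hasSum_nat_add_iff' 1).2 (hh.hasSum_taylor x t)).mul_left (t - x)⁻¹
    rw [dslope_of_ne _ htx, slope_def_field, div_eq_inv_mul]
    simp only [Finset.sum_range_one, iteratedDeriv_zero, Nat.factorial_zero, Nat.cast_one, div_one,
      pow_zero, mul_one] at htail
    have hterm (n : ℕ) : (t - x)⁻¹ *
        (iteratedDeriv (n + 1) h x / (n + 1).factorial * (t - x) ^ (n + 1)) =
        iteratedDeriv (n + 1) h x / (n + 1).factorial * (t - x) ^ n := by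
      rw [pow_succ, mul_left_comm, mul_comm _ (t - x), inv_mul_cancel_left₀ hne]
    simpa only [hterm] using htail

theorem analyticOnNhd_univ_dslope {h : ℝ → ℝ} (hh : AnalyticOnNhd ℝ h univ) (x : ℝ) :
    AnalyticOnNhd ℝ (dslope h x) univ := by
  intro t _
  rcases eq_or_ne t x with rfl | htx
  · obtain ⟨p, hp⟩ := hh t (mem_univ t)
    exact hp.has_fpower_series_dslope_fslope.analyticAt
  · have hquot : AnalyticAt ℝ (fun s => (s - x)⁻¹ * (h s - h x)) t :=
      ((analyticAt_id.sub analyticAt_const).inv (sub_ne_zero.2 htx)).mul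
        ((hh t (mem_univ t)).sub analyticAt_const)
    refine hquot.congr ?_
    filter_upwards [isOpen_ne.mem_nhds htx] with s hs
    rw [dslope_of_ne _ hs, slope_def_field, div_eq_inv_mul]

theorem EntireReal.contDiff_dslope {h : ℝ → ℝ} (hh : EntireReal h) (x : ℝ) {n : WithTop ℕ∞} :
    ContDiff ℝ n (dslope h x) :=
  (analyticOnNhd_univ_dslope hh.analyticOnNhd x).contDiff

end Entire

section RiemannLiouville

variable {a x ν μ ξ α β : ℝ} {F G K : ℝ → ℝ}

theorem intervalIntegrable_sub_rpow_mul (hν : 0 < ν) (hF : ContinuousOn F (uIcc a x)) :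
    IntervalIntegrable (fun t => (x - t) ^ (ν - 1) * F t) volume a x := by
  have hpow : IntervalIntegrable (fun t : ℝ => t ^ (ν - 1)) volume (x - a) (x - x) :=
    intervalIntegral.intervalIntegrable_rpow' (by linarith)
  have hker := hpow.comp_sub_left x
  simp only [sub_sub_cancel] at hker
  exact hker.mul_continuousOn hF

theorem integral_sub_rpow_mul_sub_rpow (hν : 0 < ν) (hμ : 0 < μ) (hax : a < x) :
    ∫ t in a..x, (x - t) ^ (ν - 1) * (t - a) ^ (μ - 1) =
      Gamma ν * Gamma μ / Gamma (ν + μ) * (x - a) ^ (ν + μ - 1) := by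
  have hX : 0 < x - a := sub_pos.2 hax
  have hshift : ∫ t in a..x, (x - t) ^ (ν - 1) * (t - a) ^ (μ - 1) =
      ∫ u in (0 : ℝ)..(x - a), u ^ (μ - 1) * (x - a - u) ^ (ν - 1) := by
    rw [← sub_self a, ← intervalIntegral.integral_comp_sub_right]
    refine intervalIntegral.integral_congr fun t _ => ?_
    rw [sub_sub_sub_cancel_right, mul_comm]
  have hreal : ∫ u in (0 : ℝ)..(x - a), (u : ℂ) ^ ((μ : ℂ) - 1) *
        (((x - a : ℝ) : ℂ) - u) ^ ((ν : ℂ) - 1) =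
      ((∫ u in (0 : ℝ)..(x - a), u ^ (μ - 1) * (x - a - u) ^ (ν - 1) : ℝ) : ℂ) := by
    rw [← intervalIntegral.integral_ofReal]
    refine intervalIntegral.integral_congr fun u hu => ?_
    rw [uIcc_of_le hX.le] at hu
    rw [Complex.ofReal_mul, Complex.ofReal_cpow hu.1, Complex.ofReal_cpow (sub_nonneg.2 hu.2)]
    push_cast
    rfl
  have hpow : ((x - a : ℝ) : ℂ) ^ ((μ : ℂ) + ν - 1) = (((x - a) ^ (μ + ν - 1) : ℝ) : ℂ) := by
    rw [Complex.ofReal_cpow hX.le]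
    push_cast
    rfl
  have hbeta := congrArg Complex.re (Complex.betaIntegral_scaled (μ : ℂ) (ν : ℂ) hX)
  rw [hreal, hpow, Complex.ofReal_re, Complex.re_ofReal_mul,
    ← ProbabilityTheory.beta_eq_betaIntegralReal μ ν hμ hν, ProbabilityTheory.beta] at hbeta
  rw [hshift, hbeta, add_comm μ ν]
  ring

theorem intervalIntegrable_sub_rpow_mul_sub_rpow (hν : 0 < ν) (hμ : 0 < μ) (hax : a < x) :
    IntervalIntegrable (fun t => (x - t) ^ (ν - 1) * (t - a) ^ (μ - 1)) volume a x := by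
  refine intervalIntegral.intervalIntegrable_of_integral_ne_zero ?_
  rw [integral_sub_rpow_mul_sub_rpow hν hμ hax]
  have := Gamma_pos_of_pos hν
  have := Gamma_pos_of_pos hμ
  have := Gamma_pos_of_pos (add_pos hν hμ)
  have := rpow_pos_of_pos (sub_pos.2 hax) (ν + μ - 1)
  positivity

@[simp]
theorem rlI_zero (a : ℝ) (F : ℝ → ℝ) : rlI a 0 F = F := by
  funext x
  simp [rlI]

theorem rlI_of_ne_zero (a : ℝ) (hν : ν ≠ 0) (F : ℝ → ℝ) (x : ℝ) :
    rlI a ν F x = (Gamma ν)⁻¹ * ∫ t in a..x, (x - t) ^ (ν - 1) * F t :=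
  if_neg hν

theorem rlI_one (a : ℝ) (F : ℝ → ℝ) (x : ℝ) : rlI a 1 F x = ∫ t in a..x, F t := by
  simp [rlI]

theorem rlI_self (a ν : ℝ) (F : ℝ → ℝ) : rlI a ν F a = if ν = 0 then F a else 0 := by
  simp [rlI]

theorem rlI_one_deriv (hF : ContDiff ℝ 1 F) : rlI a 1 (deriv F) x = F x - F a := by
  rw [rlI_one]
  exact intervalIntegral.integral_deriv_eq_sub
    (fun t _ => (hF.differentiable one_ne_zero) t)
    ((hF.continuous_deriv le_rfl).intervalIntegrable a x)

theorem rlI_congr (hFG : EqOn F G (Ioi a)) (ν : ℝ) (hax : a < x) :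
    rlI a ν F x = rlI a ν G x := by
  unfold rlI
  split_ifs
  · exact hFG hax
  · congr 1
    refine intervalIntegral.integral_congr_ae (Eventually.of_forall fun t ht => ?_)
    rw [uIoc_of_le hax.le] at ht
    rw [hFG ht.1]

theorem rlI_const_mul (a ν c : ℝ) (F : ℝ → ℝ) (x : ℝ) :
    rlI a ν (fun t => c * F t) x = c * rlI a ν F x := by
  unfold rlI
  split_ifs
  · rfl
  · simp only [mul_left_comm _ c, intervalIntegral.integral_const_mul]

theorem rlI_add (hν : 0 < ν)
    (hF : IntervalIntegrable (fun t => (x - t) ^ (ν - 1) * F t) volume a x)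
    (hG : IntervalIntegrable (fun t => (x - t) ^ (ν - 1) * G t) volume a x) :
    rlI a ν (fun t => F t + G t) x = rlI a ν F x + rlI a ν G x := by
  simp only [rlI_of_ne_zero a hν.ne', mul_add, intervalIntegral.integral_add hF hG]

theorem rlI_sub_rpow (hν : 0 ≤ ν) (hμ : 0 < μ) (hax : a < x) :
    rlI a ν (fun t => (t - a) ^ (μ - 1)) x =
      Gamma μ / Gamma (ν + μ) * (x - a) ^ (ν + μ - 1) := by
  rcases hν.eq_or_lt with rfl | hν
  · rw [rlI_zero, zero_add, div_self (Gamma_pos_of_pos hμ).ne', one_mul]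
  · rw [rlI_of_ne_zero a hν.ne', integral_sub_rpow_mul_sub_rpow hν hμ hax]
    have := (Gamma_pos_of_pos hν).ne'
    field_simp

theorem rlI_const (hν : 0 ≤ ν) (c : ℝ) (hax : a < x) :
    rlI a ν (fun _ => c) x = c * ((x - a) ^ ν / Gamma (ν + 1)) := by
  have h := rlI_sub_rpow hν one_pos hax
  simp only [sub_self, rpow_zero, Gamma_one, add_sub_cancel_right] at h
  rw [show (fun _ : ℝ => c) = fun _ => c * 1 by simp, rlI_const_mul, h]
  ring

/-! ### The semigroup property -/

theorem integral_integral_swap_triangle {f : ℝ → ℝ → ℝ} (hax : a ≤ x)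
    (hf : Integrable ({p : ℝ × ℝ | p.2 < p.1}.indicator (Function.uncurry f))
      ((volume.restrict (Ioc a x)).prod (volume.restrict (Ioc a x)))) :
    ∫ t in a..x, ∫ u in a..t, f t u = ∫ u in a..x, ∫ t in u..x, f t u := by
  have hinner₁ : ∀ t ∈ Ioc a x, ∫ u in a..t, f t u =
      ∫ u in Ioc a x, {p : ℝ × ℝ | p.2 < p.1}.indicator (Function.uncurry f) (t, u) := by
    intro t ht
    change _ = ∫ u in Ioc a x, (Iio t).indicator (f t) u
    rw [setIntegral_indicator measurableSet_Iio, ← Ioi_inter_Iic, inter_right_comm,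
      Ioi_inter_Iio, inter_eq_left.2 fun u hu => hu.2.le.trans ht.2,
      ← integral_Ioc_eq_integral_Ioo, intervalIntegral.integral_of_le ht.1.le]
  have hinner₂ : ∀ u ∈ Ioc a x, ∫ t in u..x, f t u =
      ∫ t in Ioc a x, {p : ℝ × ℝ | p.2 < p.1}.indicator (Function.uncurry f) (t, u) := by
    intro u hu
    change _ = ∫ t in Ioc a x, (Ioi u).indicator (fun t => f t u) t
    rw [setIntegral_indicator measurableSet_Ioi, Ioc_inter_Ioi, max_eq_right hu.1.le,
      intervalIntegral.integral_of_le hu.2]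
  rw [intervalIntegral.integral_of_le hax, intervalIntegral.integral_of_le hax,
    setIntegral_congr_fun measurableSet_Ioc hinner₁,
    setIntegral_congr_fun measurableSet_Ioc hinner₂]
  exact integral_integral_swap hf

theorem aestronglyMeasurable_of_sub_rpow_mul (hax : a ≤ x)
    (hF : IntervalIntegrable (fun t => (x - t) ^ (ν - 1) * F t) volume a x) :
    AEStronglyMeasurable F (volume.restrict (Ioc a x)) := by
  have hker : Measurable fun u : ℝ => ((x - u) ^ (ν - 1))⁻¹ := by fun_prop
  rw [intervalIntegrable_iff_integrableOn_Ioc_of_le hax] at hF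
  refine (hker.aestronglyMeasurable.mul hF.aestronglyMeasurable).congr ?_
  rw [← restrict_Ioo_eq_restrict_Ioc]
  filter_upwards [ae_restrict_mem measurableSet_Ioo] with u hu
  exact inv_mul_cancel_left₀ (rpow_pos_of_pos (sub_pos.2 hu.2) _).ne' _

theorem setIntegral_norm_sub_rpow_mul_sub_rpow_mul (hν : 0 < ν) (hμ : 0 < μ) (hax : a < x)
    (c : ℝ) :
    ∫ t in Ioc a x, ‖(x - t) ^ (ν - 1) * (t - a) ^ (μ - 1) * c‖ =
      Gamma ν * Gamma μ / Gamma (ν + μ) * (x - a) ^ (ν + μ - 1) * ‖c‖ := by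
  have hnorm : ∀ t ∈ Ioc a x, ‖(x - t) ^ (ν - 1) * (t - a) ^ (μ - 1) * c‖ =
      (x - t) ^ (ν - 1) * (t - a) ^ (μ - 1) * ‖c‖ := fun t ht => by
    rw [norm_mul, norm_of_nonneg (mul_nonneg (rpow_nonneg (sub_nonneg.2 ht.2) _)
      (rpow_nonneg (sub_nonneg.2 ht.1.le) _))]
  rw [setIntegral_congr_fun measurableSet_Ioc hnorm, integral_mul_const,
    ← intervalIntegral.integral_of_le hax.le, integral_sub_rpow_mul_sub_rpow hν hμ hax]

theorem integrable_indicator_sub_rpow_mul_sub_rpow_mul (hν : 0 < ν) (hμ : 0 < μ) (hax : a ≤ x)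
    (hF : IntervalIntegrable (fun t => (x - t) ^ (ν + μ - 1) * F t) volume a x) :
    Integrable ({p : ℝ × ℝ | p.2 < p.1}.indicator
        (Function.uncurry fun t u => (x - t) ^ (ν - 1) * (t - u) ^ (μ - 1) * F u))
      ((volume.restrict (Ioc a x)).prod (volume.restrict (Ioc a x))) := by
  have hne : ∀ᵐ u ∂volume.restrict (Ioc a x), u ∈ Ioo a x := by
    rw [← restrict_Ioo_eq_restrict_Ioc]
    exact ae_restrict_mem measurableSet_Ioo
  have hm : AEStronglyMeasurable ({p : ℝ × ℝ | p.2 < p.1}.indicator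
        (Function.uncurry fun t u => (x - t) ^ (ν - 1) * (t - u) ^ (μ - 1) * F u))
      ((volume.restrict (Ioc a x)).prod (volume.restrict (Ioc a x))) := by
    refine AEStronglyMeasurable.indicator ?_ (measurableSet_lt measurable_snd measurable_fst)
    have hker : Measurable fun p : ℝ × ℝ => (x - p.1) ^ (ν - 1) * (p.1 - p.2) ^ (μ - 1) := by
      fun_prop
    exact hker.aestronglyMeasurable.mul (aestronglyMeasurable_of_sub_rpow_mul hax hF).comp_snd
  have hslice : ∀ u, (fun t => {p : ℝ × ℝ | p.2 < p.1}.indicator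
        (Function.uncurry fun t u => (x - t) ^ (ν - 1) * (t - u) ^ (μ - 1) * F u) (t, u)) =
      (Ioi u).indicator fun t => (x - t) ^ (ν - 1) * (t - u) ^ (μ - 1) * F u := fun u => rfl
  rw [intervalIntegrable_iff_integrableOn_Ioc_of_le hax] at hF
  refine (integrable_prod_iff' hm).2 ⟨?_, ?_⟩
  · filter_upwards [hne] with u hu
    rw [hslice, integrable_indicator_iff measurableSet_Ioi, IntegrableOn,
      Measure.restrict_restrict measurableSet_Ioi, inter_comm, Ioc_inter_Ioi,
      max_eq_right hu.1.le]
    exact ((intervalIntegrable_iff_integrableOn_Ioc_of_le hu.2.le).1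
      (intervalIntegrable_sub_rpow_mul_sub_rpow hν hμ hu.2)).mul_const _
  · refine (hF.norm.const_mul (Gamma ν * Gamma μ / Gamma (ν + μ))).congr ?_
    filter_upwards [hne] with u hu
    rw [norm_mul, norm_of_nonneg (rpow_nonneg (sub_nonneg.2 hu.2.le) _), ← mul_assoc,
      ← setIntegral_norm_sub_rpow_mul_sub_rpow_mul hν hμ hu.2]
    change _ = ∫ t in Ioc a x, ‖(Ioi u).indicator
      (fun t => (x - t) ^ (ν - 1) * (t - u) ^ (μ - 1) * F u) t‖
    simp only [norm_indicator_eq_indicator_norm]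
    rw [setIntegral_indicator measurableSet_Ioi, Ioc_inter_Ioi, max_eq_right hu.1.le]

theorem rlI_rlI (hν : 0 ≤ ν) (hμ : 0 ≤ μ) (hax : a ≤ x)
    (hF : IntervalIntegrable (fun t => (x - t) ^ (ν + μ - 1) * F t) volume a x) :
    rlI a ν (rlI a μ F) x = rlI a (ν + μ) F x := by
  rcases hν.eq_or_lt with rfl | hν
  · rw [rlI_zero, zero_add]
  rcases hμ.eq_or_lt with rfl | hμ
  · rw [rlI_zero, add_zero]
  have hinner : ∀ u ∈ Ioo a x, ∫ t in u..x, (x - t) ^ (ν - 1) * (t - u) ^ (μ - 1) * F u =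
      Gamma ν * Gamma μ / Gamma (ν + μ) * ((x - u) ^ (ν + μ - 1) * F u) := fun u hu => by
    rw [intervalIntegral.integral_mul_const, integral_sub_rpow_mul_sub_rpow hν hμ hu.2, mul_assoc]
  have hΓν := (Gamma_pos_of_pos hν).ne'
  have hΓμ := (Gamma_pos_of_pos hμ).ne'
  calc rlI a ν (rlI a μ F) x
      = (Gamma ν)⁻¹ * ((Gamma μ)⁻¹ *
          ∫ t in a..x, ∫ u in a..t, (x - t) ^ (ν - 1) * (t - u) ^ (μ - 1) * F u) := by
        simp only [rlI_of_ne_zero a hν.ne', rlI_of_ne_zero a hμ.ne', mul_assoc,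
          intervalIntegral.integral_const_mul, mul_left_comm _ (Gamma μ)⁻¹]
    _ = (Gamma ν)⁻¹ * ((Gamma μ)⁻¹ *
          ∫ u in a..x, ∫ t in u..x, (x - t) ^ (ν - 1) * (t - u) ^ (μ - 1) * F u) := by
        rw [integral_integral_swap_triangle hax
          (integrable_indicator_sub_rpow_mul_sub_rpow_mul hν hμ hax hF)]
    _ = (Gamma ν)⁻¹ * ((Gamma μ)⁻¹ * (Gamma ν * Gamma μ / Gamma (ν + μ) *
          ∫ u in a..x, (x - u) ^ (ν + μ - 1) * F u)) := by
        rw [intervalIntegral.integral_of_le hax, intervalIntegral.integral_of_le hax,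
          integral_Ioc_eq_integral_Ioo, integral_Ioc_eq_integral_Ioo,
          setIntegral_congr_fun measurableSet_Ioo hinner, integral_const_mul]
    _ = rlI a (ν + μ) F x := by
        rw [rlI_of_ne_zero a (add_pos hν hμ).ne']
        field_simp

theorem rlI_eq_rpow_mul_integral (hν : 0 < ν) (hax : a ≤ x) (F : ℝ → ℝ) :
    rlI a ν F x = (Gamma ν)⁻¹ *
      ((x - a) ^ ν * ∫ s in (0 : ℝ)..1, s ^ (ν - 1) * F (x - (x - a) * s)) := by
  rw [rlI_of_ne_zero a hν.ne']
  rcases hax.eq_or_lt with rfl | hax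
  · simp [hν.ne']
  have hX : 0 < x - a := sub_pos.2 hax
  have hsubst := intervalIntegral.integral_comp_sub_mul (a := 0) (b := 1)
    (fun t => (x - t) ^ (ν - 1) * F t) hX.ne' x
  rw [mul_one, mul_zero, sub_zero, sub_sub_cancel, smul_eq_mul, eq_inv_mul_iff_mul_eq₀ hX.ne']
    at hsubst
  have hpow : (x - a) ^ ν = (x - a) * (x - a) ^ (ν - 1) := by
    rw [rpow_sub_one hX.ne', mul_div_cancel₀ _ hX.ne']
  rw [← hsubst, hpow, mul_assoc, ← intervalIntegral.integral_const_mul ((x - a) ^ (ν - 1))]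
  congr 2
  refine intervalIntegral.integral_congr fun s hs => ?_
  rw [uIcc_of_le zero_le_one] at hs
  rw [sub_sub_cancel, mul_rpow hX.le hs.1, mul_assoc]

theorem continuousOn_rlI (hν : 0 ≤ ν) (hF : ContinuousOn F (Ici a)) :
    ContinuousOn (rlI a ν F) (Ici a) := by
  rcases hν.eq_or_lt with rfl | hν
  · rwa [rlI_zero]
  refine ContinuousOn.congr (continuousOn_const.mul (ContinuousOn.mul ?_ ?_))
    fun x hx => rlI_eq_rpow_mul_integral hν hx F
  · exact (continuousOn_id.sub continuousOn_const).rpow_const fun _ _ => .inr hν.le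
  intro x hx
  obtain ⟨C, hC⟩ := isCompact_Icc.exists_bound_of_continuousOn
    (hF.mono (Icc_subset_Ici_self (a := x + 1) (b := a)))
  have hmem {y s : ℝ} (hy : a ≤ y) (hs : s ∈ uIoc (0 : ℝ) 1) : y - (y - a) * s ∈ Icc a y := by
    rw [uIoc_of_le zero_le_one] at hs
    constructor <;> nlinarith [hs.1, hs.2, sub_nonneg.2 hy]
  refine intervalIntegral.continuousWithinAt_of_dominated_interval
    (bound := fun s => s ^ (ν - 1) * C) ?_ ?_ ?_ ?_
  · filter_upwards [self_mem_nhdsWithin] with y hy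
    refine (Measurable.aestronglyMeasurable (by fun_prop)).mul
      (ContinuousOn.aestronglyMeasurable (fun s hs => ?_) measurableSet_uIoc)
    exact (hF _ (hmem hy hs).1).comp (f := fun s => y - (y - a) * s) (by fun_prop)
      fun r hr => (hmem hy hr).1
  · filter_upwards [self_mem_nhdsWithin, mem_nhdsWithin_of_mem_nhds (Iic_mem_nhds (lt_add_one x))]
      with y hy hyx
    refine Eventually.of_forall fun s hs => ?_
    have hs' := hs
    rw [uIoc_of_le zero_le_one] at hs'
    rw [norm_mul, norm_of_nonneg (rpow_nonneg hs'.1.le _)]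
    exact mul_le_mul_of_nonneg_left (hC _ (Icc_subset_Icc_right hyx (hmem hy hs)))
      (rpow_nonneg hs'.1.le _)
  · exact (intervalIntegral.intervalIntegrable_rpow' (by linarith)).mul_const C
  · refine Eventually.of_forall fun s hs => continuousWithinAt_const.mul ?_
    exact (hF _ (hmem hx hs).1).comp (f := fun y => y - (y - a) * s) (by fun_prop)
      fun y hy => (hmem hy hs).1

theorem intervalIntegrable_sub_rpow_mul_of_Ici (hν : 0 < ν) (hF : ContinuousOn F (Ici a))
    (hax : a ≤ x) : IntervalIntegrable (fun t => (x - t) ^ (ν - 1) * F t) volume a x :=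
  intervalIntegrable_sub_rpow_mul hν (hF.mono (uIcc_of_le hax ▸ Icc_subset_Ici_self))

theorem rlI_const_add (hν : 0 ≤ ν) (c : ℝ) (hF : ContinuousOn F (Ici a)) (hax : a < x) :
    rlI a ν (fun t => c + F t) x = c * ((x - a) ^ ν / Gamma (ν + 1)) + rlI a ν F x := by
  rcases hν.eq_or_lt with rfl | hν
  · simp
  · rw [rlI_add hν (intervalIntegrable_sub_rpow_mul_of_Ici hν continuousOn_const hax.le)
      (intervalIntegrable_sub_rpow_mul_of_Ici hν hF hax.le), rlI_const hν.le c hax]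

theorem rlI_rlI_comm (hν : 0 ≤ ν) (hμ : 0 ≤ μ) (hF : ContinuousOn F (Ici a)) (hax : a ≤ x) :
    rlI a ν (rlI a μ F) x = rlI a μ (rlI a ν F) x := by
  rcases hν.eq_or_lt with rfl | hν
  · simp only [rlI_zero]
  have hint := intervalIntegrable_sub_rpow_mul_of_Ici (add_pos_of_pos_of_nonneg hν hμ) hF hax
  rw [rlI_rlI hν.le hμ hax hint, rlI_rlI hμ hν.le hax (add_comm ν μ ▸ hint), add_comm]

theorem hasDerivAt_rlI_one (hF : ContinuousOn F (Ici a)) (hax : a < x) :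
    HasDerivAt (rlI a 1 F) (F x) x := by
  rw [funext (rlI_one a F)]
  refine intervalIntegral.integral_hasDerivAt_right
    (hF.mono (uIcc_of_le hax.le ▸ Icc_subset_Ici_self)).intervalIntegrable
    ?_ (hF.continuousAt (Ici_mem_nhds hax))
  exact (hF.mono Ioi_subset_Ici_self).stronglyMeasurableAtFilter isOpen_Ioi x hax

/-! ### Hilfer derivatives of primitives -/

/-- At `ν = 0` the first term of the derivative vanishes because of the junk value `Gamma 0 = 0`. -/
theorem hasDerivAt_rlI_const_add_rlI_one (hν : 0 ≤ ν) (c : ℝ) (hG : ContinuousOn G (Ici a))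
    (hax : a < x) :
    HasDerivAt (rlI a ν (fun t => c + rlI a 1 G t))
      (c * ((x - a) ^ (ν - 1) / Gamma ν) + rlI a ν G x) x := by
  have hpow : HasDerivAt (fun z => (z - a) ^ ν / Gamma (ν + 1))
      ((x - a) ^ (ν - 1) / Gamma ν) x := by
    rcases hν.eq_or_lt with rfl | hν
    · simpa using hasDerivAt_const x (1 : ℝ)
    · have h := (((hasDerivAt_id' x).sub_const a).rpow_const (p := ν)
        (.inl (sub_pos.2 hax).ne')).div_const (Gamma (ν + 1))
      rw [one_mul, Gamma_add_one hν.ne', mul_div_mul_left _ _ hν.ne'] at h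
      rwa [Gamma_add_one hν.ne']
  have hsum := (hpow.const_mul c).add (hasDerivAt_rlI_one (continuousOn_rlI hν hG) hax)
  refine hsum.congr_of_eventuallyEq ?_
  filter_upwards [Ioi_mem_nhds hax] with z hz
  rw [rlI_const_add hν c (continuousOn_rlI zero_le_one hG) hz,
    rlI_rlI_comm hν zero_le_one hG hz.le]
  rfl

theorem hilD_congr (hFG : EqOn F G (Ioi a)) (α β : ℝ) (hax : a < x) :
    hilD a α β F x = hilD a α β G x := by
  refine rlI_congr (fun y hy => EventuallyEq.deriv_eq ?_) _ hax
  filter_upwards [Ioi_mem_nhds hy] with z hz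
  exact rlI_congr hFG _ hz

theorem rlI_sub_rpow_div_Gamma_add_rlI (hν : 0 < ν) (hξ : 0 ≤ ξ) (c : ℝ)
    (hG : ContinuousOn G (Ici a)) (hax : a < x) :
    rlI a ν (fun t => c * ((t - a) ^ (ξ - 1) / Gamma ξ) + rlI a ξ G t) x =
      (if ξ = 0 then 0 else c) * ((x - a) ^ (ν + ξ - 1) / Gamma (ν + ξ)) +
        rlI a (ν + ξ) G x := by
  rcases hξ.eq_or_lt with rfl | hξ
  · simp
  have hpow : (fun t => c * ((t - a) ^ (ξ - 1) / Gamma ξ)) =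
      fun t => c / Gamma ξ * (t - a) ^ (ξ - 1) := by
    funext t
    ring
  have hpowint : IntervalIntegrable
      (fun t => (x - t) ^ (ν - 1) * (c * ((t - a) ^ (ξ - 1) / Gamma ξ))) volume a x := by
    refine ((intervalIntegrable_sub_rpow_mul_sub_rpow hν hξ hax).const_mul (c / Gamma ξ)).congr ?_
    exact fun t _ => by ring
  rw [rlI_add hν hpowint
      (intervalIntegrable_sub_rpow_mul_of_Ici hν (continuousOn_rlI hξ.le hG) hax.le),
    rlI_rlI hν.le hξ.le hax.le (intervalIntegrable_sub_rpow_mul_of_Ici (by positivity) hG hax.le),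
    hpow, rlI_const_mul, rlI_sub_rpow hν.le hξ hax, if_neg hξ.ne']
  have := (Gamma_pos_of_pos hξ).ne'
  field_simp

theorem hilD_const_add_rlI_one (hα : α < 1) (hβ₀ : 0 < β) (hβ₁ : β ≤ 1) (c : ℝ)
    (hG : ContinuousOn G (Ici a)) (hax : a < x) :
    hilD a α β (fun t => c + rlI a 1 G t) x =
      (if (1 - β) * (1 - α) = 0 then 0 else c) * ((x - a) ^ (-α) / Gamma (1 - α)) +
        rlI a (1 - α) G x := by
  have hξ : 0 ≤ (1 - β) * (1 - α) := mul_nonneg (by linarith) (by linarith)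
  have hν : 0 < β * (1 - α) := mul_pos hβ₀ (by linarith)
  have hsum : β * (1 - α) + (1 - β) * (1 - α) = 1 - α := by ring
  have hderiv : EqOn (deriv (rlI a ((1 - β) * (1 - α)) fun t => c + rlI a 1 G t))
      (fun y => c * ((y - a) ^ ((1 - β) * (1 - α) - 1) / Gamma ((1 - β) * (1 - α))) +
        rlI a ((1 - β) * (1 - α)) G y) (Ioi a) :=
    fun y hy => (hasDerivAt_rlI_const_add_rlI_one hξ c hG hy).deriv
  rw [hilD, rlI_congr hderiv _ hax, rlI_sub_rpow_div_Gamma_add_rlI hν hξ c hG hax, hsum,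
    sub_sub_cancel_left]

theorem eq_const_add_rlI_one_deriv (a : ℝ) (hF : ContDiff ℝ 1 F) :
    F = fun t => F a + rlI a 1 (deriv F) t := by
  funext t
  rw [rlI_one_deriv hF, add_sub_cancel]

theorem hilD_of_contDiff (hα : α < 1) (hβ₀ : 0 < β) (hβ₁ : β ≤ 1) (hF : ContDiff ℝ 1 F)
    (hax : a < x) :
    hilD a α β F x =
      (F a - rlI a ((1 - β) * (1 - α)) F a) * ((x - a) ^ (-α) / Gamma (1 - α)) +
        rlI a (1 - α) (deriv F) x := by
  have hc : (if (1 - β) * (1 - α) = 0 then 0 else F a) = F a - rlI a ((1 - β) * (1 - α)) F a := by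
    rw [rlI_self]
    split_ifs <;> ring
  rw [← hc, ← hilD_const_add_rlI_one hα hβ₀ hβ₁ (F a)
    (hF.continuous_deriv le_rfl).continuousOn hax, ← eq_const_add_rlI_one_deriv a hF]

theorem eqOn_rlI_natCast_succ (hG : ContinuousOn G (Ici a)) (m : ℕ) :
    EqOn (rlI a (m + 1 : ℕ) G) (fun t => 0 + rlI a 1 (rlI a m G) t) (Ioi a) := by
  intro t ht
  simp only [zero_add]
  rw [rlI_rlI zero_le_one m.cast_nonneg (le_of_lt ht) (intervalIntegrable_sub_rpow_mul_of_Ici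
    (by positivity) hG (le_of_lt ht)), Nat.cast_succ, add_comm]

theorem hilD_rlI_natCast_succ (hα : α < 1) (hβ₀ : 0 < β) (hβ₁ : β ≤ 1)
    (hG : ContinuousOn G (Ici a)) (hax : a < x) (m : ℕ) :
    hilD a α β (rlI a (m + 1 : ℕ) G) x = rlI a (1 - α + m) G x := by
  have hm : (0 : ℝ) ≤ m := m.cast_nonneg
  rw [hilD_congr (eqOn_rlI_natCast_succ hG m) α β hax,
    hilD_const_add_rlI_one hα hβ₀ hβ₁ 0 (continuousOn_rlI hm hG) hax, ite_self, zero_mul, zero_add,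
    rlI_rlI (by linarith) hm hax.le
      (intervalIntegrable_sub_rpow_mul_of_Ici (by linarith) hG hax.le)]

theorem differentiableOn_rlI (hν : 0 ≤ ν) (hF : ContDiff ℝ 1 F) :
    DifferentiableOn ℝ (rlI a ν F) (Ioi a) := by
  intro z hz
  rw [eq_const_add_rlI_one_deriv a hF]
  exact (hasDerivAt_rlI_const_add_rlI_one hν (F a) (hF.continuous_deriv le_rfl).continuousOn
    hz).differentiableAt.differentiableWithinAt

theorem differentiableOn_rlI_rlI_natCast (hν : 0 ≤ ν) (hG : ContDiff ℝ 1 G) (m : ℕ) :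
    DifferentiableOn ℝ (rlI a ν (rlI a m G)) (Ioi a) := by
  cases m with
  | zero => simpa using differentiableOn_rlI hν hG
  | succ m =>
    have hGc : ContinuousOn G (Ici a) := hG.continuous.continuousOn
    refine DifferentiableOn.congr (fun z hz => ?_)
      fun z hz => rlI_congr (eqOn_rlI_natCast_succ hGc m) ν hz
    exact (hasDerivAt_rlI_const_add_rlI_one hν 0 (continuousOn_rlI m.cast_nonneg hGc)
      hz).differentiableAt.differentiableWithinAt

/-! ### The Leibniz rule for the classical operators -/

theorem rlI_sub_pow_mul (hν : 0 < ν) (hax : a ≤ x) (G : ℝ → ℝ) (m : ℕ) :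
    rlI a ν (fun t => (t - x) ^ m * G t) x =
      genBinom (-ν) m * m.factorial * rlI a (ν + m) G x := by
  have hker : ∀ t ∈ Ioo a x, (x - t) ^ (ν - 1) * ((t - x) ^ m * G t) =
      (-1) ^ m * ((x - t) ^ (ν + m - 1) * G t) := fun t ht => by
    rw [add_sub_right_comm, rpow_add_natCast (sub_pos.2 ht.2).ne', ← neg_sub x t, neg_pow]
    ring
  have hΓ := (Gamma_pos_of_pos (show 0 < ν + m by positivity)).ne'
  rw [rlI_of_ne_zero a hν.ne', rlI_of_ne_zero a (by positivity), genBinom_neg_mul_factorial hν,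
    intervalIntegral.integral_of_le hax, intervalIntegral.integral_of_le hax,
    integral_Ioc_eq_integral_Ioo, integral_Ioc_eq_integral_Ioo,
    setIntegral_congr_fun measurableSet_Ioo hker, integral_const_mul]
  field_simp

theorem rlI_deriv_sub_mul (hν : 0 < ν) (hax : a < x) (hK : ContDiff ℝ 1 K) :
    rlI a ν (deriv fun t => (t - x) * K t) x =
      (1 - ν) * rlI a ν K x + K a * ((x - a) ^ ν / Gamma ν) := by
  have hKc : ContinuousOn K (Ici a) := hK.continuous.continuousOn
  have hK'c : ContinuousOn (deriv K) (Ici a) := (hK.continuous_deriv le_rfl).continuousOn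
  have hderiv : (deriv fun t => (t - x) * K t) = fun t => K t + (t - x) ^ 1 * deriv K t := by
    funext t
    rw [deriv_fun_mul (by fun_prop) (hK.differentiable one_ne_zero t)]
    simp
  have hK' (t : ℝ) : rlI a 1 (deriv K) t = -K a + K t := by
    rw [rlI_one_deriv hK, sub_eq_neg_add]
  have hprim : rlI a (ν + 1) (deriv K) x = rlI a ν K x - K a * ((x - a) ^ ν / Gamma (ν + 1)) := by
    rw [← rlI_rlI hν.le zero_le_one hax.le
      (intervalIntegrable_sub_rpow_mul_of_Ici (by positivity) hK'c hax.le),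
      funext hK', rlI_const_add hν.le _ hKc hax]
    ring
  rw [hderiv, rlI_add hν (intervalIntegrable_sub_rpow_mul_of_Ici hν hKc hax.le)
      (intervalIntegrable_sub_rpow_mul_of_Ici hν (by fun_prop) hax.le),
    rlI_sub_pow_mul hν hax.le, Nat.cast_one, hprim, Gamma_add_one hν.ne']
  simp only [genBinom, Finset.prod_range_one, Nat.factorial_one, Nat.cast_zero, Nat.cast_one]
  field_simp
  ring

theorem hasSum_rlI_mul {q : ℕ → ℝ} {Q : ℝ → ℝ} (hν : 0 < ν) (hax : a ≤ x)
    (hQ : ∀ t ∈ Icc a x, HasSum (fun m => q m * (t - x) ^ m) (Q t))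
    (hG : ContinuousOn G (Ici a)) :
    HasSum (fun m : ℕ => q m * (genBinom (-ν) m * m.factorial * rlI a (ν + m) G x))
      (rlI a ν (fun t => Q t * G t) x) := by
  have hGint := intervalIntegrable_sub_rpow_mul_of_Ici hν hG hax
  have hsummable : Summable fun m => ‖q m‖ * (x - a) ^ m := by
    simpa [abs_mul, abs_pow, abs_sub_comm a x, abs_of_nonneg (sub_nonneg.2 hax)] using
      (hQ a (left_mem_Icc.2 hax)).summable.norm
  have hbound {t : ℝ} (ht : t ∈ Ioc a x) (m : ℕ) :
      ‖(x - t) ^ (ν - 1) * (q m * ((t - x) ^ m * G t))‖ ≤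
        ‖q m‖ * (x - a) ^ m * ‖(x - t) ^ (ν - 1) * G t‖ := by
    have hpow : ‖t - x‖ ^ m ≤ (x - a) ^ m :=
      pow_le_pow_left₀ (norm_nonneg _)
        (by rw [norm_sub_rev, norm_of_nonneg (sub_nonneg.2 ht.2)]; linarith [ht.1]) m
    calc ‖(x - t) ^ (ν - 1) * (q m * ((t - x) ^ m * G t))‖
        = ‖q m‖ * ‖t - x‖ ^ m * ‖(x - t) ^ (ν - 1) * G t‖ := by
          simp only [norm_mul, norm_pow]
          ring
      _ ≤ _ := by gcongr
  have hint : HasSum (fun m => ∫ t in a..x, (x - t) ^ (ν - 1) * (q m * ((t - x) ^ m * G t)))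
      (∫ t in a..x, (x - t) ^ (ν - 1) * (Q t * G t)) := by
    refine intervalIntegral.hasSum_integral_of_dominated_convergence
      (fun m t => ‖q m‖ * (x - a) ^ m * ‖(x - t) ^ (ν - 1) * G t‖) (fun m => ?_) (fun m => ?_) ?_
      ?_ ?_
    · exact (intervalIntegrable_iff.1 (intervalIntegrable_sub_rpow_mul_of_Ici hν
        (by fun_prop) hax)).aestronglyMeasurable
    · exact Eventually.of_forall fun t ht => hbound (uIoc_of_le hax ▸ ht) m
    · exact Eventually.of_forall fun t _ => hsummable.mul_right _
    · simpa only [tsum_mul_right] using hGint.norm.const_mul _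
    · refine Eventually.of_forall fun t ht => ?_
      rw [uIoc_of_le hax] at ht
      simpa only [mul_assoc] using
        ((hQ t (Ioc_subset_Icc_self ht)).mul_right (G t)).mul_left ((x - t) ^ (ν - 1))
  simpa only [← rlI_of_ne_zero a hν.ne', rlI_const_mul, rlI_sub_pow_mul hν hax] using
    hint.mul_left (Gamma ν)⁻¹

theorem hilD_const_mul (a α β c : ℝ) (F : ℝ → ℝ) (x : ℝ) :
    hilD a α β (fun t => c * F t) x = c * hilD a α β F x := by
  simp only [hilD, rlI_const_mul, deriv_const_mul_field]

theorem hilD_add (hα : α < 1) (hβ₀ : 0 < β) (hβ₁ : β ≤ 1) (hF : ContDiff ℝ 1 F)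
    (hG : ContDiff ℝ 1 G) (hax : a < x) :
    hilD a α β (fun t => F t + G t) x = hilD a α β F x + hilD a α β G x := by
  have hν : 0 < 1 - α := sub_pos.2 hα
  have hF' : ContinuousOn (deriv F) (Ici a) := (hF.continuous_deriv le_rfl).continuousOn
  have hG' : ContinuousOn (deriv G) (Ici a) := (hG.continuous_deriv le_rfl).continuousOn
  have hderiv : deriv (fun t => F t + G t) = fun t => deriv F t + deriv G t := funext fun t =>
    deriv_fun_add (hF.differentiable one_ne_zero t) (hG.differentiable one_ne_zero t)
  have hself : rlI a ((1 - β) * (1 - α)) (fun t => F t + G t) a =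
      rlI a ((1 - β) * (1 - α)) F a + rlI a ((1 - β) * (1 - α)) G a := by
    simp only [rlI_self]
    split_ifs <;> simp
  rw [hilD_of_contDiff hα hβ₀ hβ₁ (hF.add hG) hax, hilD_of_contDiff hα hβ₀ hβ₁ hF hax,
    hilD_of_contDiff hα hβ₀ hβ₁ hG hax, hderiv, hself,
    rlI_add hν (intervalIntegrable_sub_rpow_mul_of_Ici hν hF' hax.le)
      (intervalIntegrable_sub_rpow_mul_of_Ici hν hG' hax.le)]
  ring

theorem hilD_sub_mul (hα : α < 1) (hβ₀ : 0 < β) (hβ₁ : β ≤ 1) (hK : ContDiff ℝ 1 K)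
    (hax : a < x) :
    hilD a α β (fun t => (t - x) * K t) x =
      α * rlI a (1 - α) K x +
        rlI a ((1 - β) * (1 - α)) K a * (x - a) * ((x - a) ^ (-α) / Gamma (1 - α)) := by
  have hself : rlI a ((1 - β) * (1 - α)) (fun t => (t - x) * K t) a =
      (a - x) * rlI a ((1 - β) * (1 - α)) K a := by
    simp [rlI_self]
  have hpow : (x - a) ^ (1 - α) = (x - a) * (x - a) ^ (-α) := by
    rw [← rpow_one_add' (sub_pos.2 hax).le (by linarith), sub_eq_add_neg 1 α]
  have hprod : ContDiff ℝ 1 fun t => (t - x) * K t := by fun_prop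
  rw [hilD_of_contDiff hα hβ₀ hβ₁ hprod hax,
    rlI_deriv_sub_mul (sub_pos.2 hα) hax hK, hself, hpow]
  ring

theorem hilD_mul_eq (hα : α < 1) (hβ₀ : 0 < β) (hβ₁ : β ≤ 1) (hF : ContDiff ℝ 1 (dslope F x))
    (hG : ContDiff ℝ 1 G) (hax : a < x) :
    hilD a α β (fun t => F t * G t) x =
      F x * hilD a α β G x + α * rlI a (1 - α) (fun t => dslope F x t * G t) x +
        rlI a ((1 - β) * (1 - α)) G a * (F x - F a) * ((x - a) ^ (-α) / Gamma (1 - α)) := by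
  have hslope (t : ℝ) : (t - x) * dslope F x t = F t - F x := sub_smul_dslope F x t
  have hFG : (fun t => F t * G t) = fun t => F x * G t + (t - x) * (dslope F x t * G t) := by
    funext t
    linear_combination -(G t) * hslope t
  have hself : rlI a ((1 - β) * (1 - α)) (fun t => dslope F x t * G t) a * (x - a) =
      rlI a ((1 - β) * (1 - α)) G a * (F x - F a) := by
    simp only [rlI_self]
    split_ifs
    · linear_combination -(G a) * hslope a
    · ring
  have hK : ContDiff ℝ 1 fun t => dslope F x t * G t := hF.mul hG
  have hFxG : ContDiff ℝ 1 fun t => F x * G t := contDiff_const.mul hG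
  have hprod : ContDiff ℝ 1 fun t => (t - x) * (dslope F x t * G t) := by fun_prop
  rw [hFG, hilD_add hα hβ₀ hβ₁ hFxG hprod hax, hilD_const_mul, hilD_sub_mul hα hβ₀ hβ₁ hK hax,
    hself]
  ring

theorem hasSum_hilD_mul (hα : α < 1) (hβ₀ : 0 < β) (hβ₁ : β ≤ 1) (hF : EntireReal F)
    (hG : ContDiff ℝ 1 G) (hax : a < x) :
    HasSum (fun m : ℕ => genBinom α m * iteratedDeriv m F x * hilD a α β (rlI a m G) x)
      (hilD a α β (fun t => F t * G t) x -
        rlI a ((1 - β) * (1 - α)) G a * (F x - F a) * ((x - a) ^ (-α) / Gamma (1 - α))) := by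
  have hGc : ContinuousOn G (Ici a) := hG.continuous.continuousOn
  have htail := (hasSum_rlI_mul (sub_pos.2 hα) hax.le
    (fun t _ => hF.hasSum_dslope x t) hGc).mul_left α
  have hterm (m : ℕ) : α * (iteratedDeriv (m + 1) F x / (m + 1).factorial *
      (genBinom (-(1 - α)) m * m.factorial * rlI a (1 - α + m) G x)) =
      genBinom α (m + 1) * iteratedDeriv (m + 1) F x * hilD a α β (rlI a (m + 1 : ℕ) G) x := by
    rw [hilD_rlI_natCast_succ hα hβ₀ hβ₁ hGc hax, neg_sub, Nat.factorial_succ,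
      eq_div_of_mul_eq (by positivity) (genBinom_succ_mul α m)]
    push_cast
    field_simp
  simp only [hterm] at htail
  have hsum := (hasSum_nat_add_iff (f := fun m : ℕ =>
    genBinom α m * iteratedDeriv m F x * hilD a α β (rlI a m G) x) 1).1 htail
  rw [Finset.sum_range_one, genBinom_zero, iteratedDeriv_zero, Nat.cast_zero, rlI_zero, one_mul,
    add_comm] at hsum
  rwa [hilD_mul_eq hα hβ₀ hβ₁ (hF.contDiff_dslope x) hG hax, add_sub_cancel_right]

end RiemannLiouville

section ChangeOfVariable

variable {a b x α β ξ : ℝ} {Ψ f F : ℝ → ℝ}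

theorem psiI_self (a : ℝ) (Ψ f : ℝ → ℝ) (γ : ℝ) :
    psiI a Ψ f γ a = if γ = 0 then f a else 0 := by
  simp [psiI]

theorem lt_of_deriv_pos_of_mem_Ioo (hΨ : ContinuousOn Ψ (Ico a b))
    (hΨ' : ∀ t ∈ Ioo a b, 0 < deriv Ψ t) (hx : x ∈ Ioo a b) : Ψ a < Ψ x :=
  strictMonoOn_of_deriv_pos (convex_Ico a b) hΨ (by rwa [interior_Ico])
    (left_mem_Ico.2 (hx.1.trans hx.2)) (Ioo_subset_Ico_self hx) hx.1

theorem psiI_eq_rlI (hΨ : ContinuousOn Ψ (Ico a b)) (hΨ' : ∀ t ∈ Ioo a b, 0 < deriv Ψ t)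
    (hf : EqOn f (F ∘ Ψ) (Ioo a b)) (hx : x ∈ Ioo a b) (γ : ℝ) :
    psiI a Ψ f γ x = rlI (Ψ a) γ F (Ψ x) := by
  unfold psiI rlI
  split_ifs
  · exact hf hx
  have hsub {t : ℝ} (ht : t ∈ Ioo (min a x) (max a x)) : t ∈ Ioo a b := by
    rw [min_eq_left hx.1.le, max_eq_right hx.1.le] at ht
    exact ⟨ht.1, ht.2.trans hx.2⟩
  rw [← intervalIntegral.integral_comp_mul_deriv_of_deriv_nonneg
    (hΨ.mono (uIcc_of_le hx.1.le ▸ Icc_subset_Ico_right hx.2))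
    (fun t ht => (differentiableAt_of_deriv_ne_zero (hΨ' t (hsub ht)).ne').hasDerivAt)
    fun t ht => (hΨ' t (hsub ht)).le]
  congr 1
  refine intervalIntegral.integral_congr_ae (Eventually.of_forall fun t ht => ?_)
  rw [uIoc_of_le hx.1.le] at ht
  rw [hf ⟨ht.1, ht.2.trans_lt hx.2⟩, Function.comp_apply, Function.comp_apply]
  ring

theorem psiHD_eq_hilD (hΨ : ContinuousOn Ψ (Ico a b)) (hΨ' : ∀ t ∈ Ioo a b, 0 < deriv Ψ t)
    (hf : EqOn f (F ∘ Ψ) (Ioo a b))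
    (hF : DifferentiableOn ℝ (rlI (Ψ a) ((1 - β) * (1 - α)) F) (Ioi (Ψ a))) (hx : x ∈ Ioo a b) :
    psiHD a Ψ f α β x = hilD (Ψ a) α β F (Ψ x) := by
  refine psiI_eq_rlI hΨ hΨ' (fun y hy => ?_) hx _
  have hlocal : (fun z => psiI a Ψ f ((1 - β) * (1 - α)) z) =ᶠ[𝓝 y]
      rlI (Ψ a) ((1 - β) * (1 - α)) F ∘ Ψ := by
    filter_upwards [isOpen_Ioo.mem_nhds hy] with z hz
    exact psiI_eq_rlI hΨ hΨ' hf hz _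
  have houter := hF.differentiableAt (Ioi_mem_nhds (lt_of_deriv_pos_of_mem_Ioo hΨ hΨ' hy))
  have hinner := differentiableAt_of_deriv_ne_zero (hΨ' y hy).ne'
  rw [hlocal.deriv_eq, deriv_comp y houter hinner, mul_comm,
    mul_inv_cancel_right₀ (hΨ' y hy).ne', Function.comp_apply]

theorem hasSum_genBinom_mul_psiI_self (hξ : 0 ≤ ξ) (a : ℝ) (Ψ f : ℝ → ℝ) (D : ℕ → ℝ) :
    HasSum (fun k : ℕ => genBinom (-ξ) k * psiI a Ψ f (ξ + k) a * D k)
      (psiI a Ψ f ξ a * D 0) := by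
  have hvanish (k : ℕ) (hk : k ≠ 0) : genBinom (-ξ) k * psiI a Ψ f (ξ + k) a * D k = 0 := by
    rw [psiI_self, if_neg (by positivity), mul_zero, zero_mul]
  simpa [genBinom_zero] using hasSum_single 0 hvanish

end ChangeOfVariable

theorem leibniz_type_rule_II_general {a b α β : ℝ} (hα : α < 1) (hβ₀ : 0 < β) (hβ₁ : β ≤ 1)
    {Ψ h w : ℝ → ℝ} (hΨ : ContinuousOn Ψ (Ico a b)) (hΨ' : ∀ t ∈ Ioo a b, 0 < deriv Ψ t)
    (hh : EntireReal h) (hw : ContDiff ℝ 1 w) {x : ℝ} (hx : x ∈ Ioo a b) :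
    Summable (fun m : ℕ => genBinom α m * iteratedDeriv m h (Ψ x) *
        psiHD a Ψ (fun y => psiI a Ψ (fun t => w (Ψ t)) (m : ℝ) y) α β x) ∧
    Summable (fun k : ℕ =>
        genBinom (-((1 - β) * (1 - α))) k * psiI a Ψ (fun t => w (Ψ t)) ((1 - β) * (1 - α) + k) a *
          (iteratedDeriv k h (Ψ x) - iteratedDeriv k h (Ψ a)) *
          (Ψ x - Ψ a) ^ (-(α + (1 - β) * (1 - α))) / Gamma (β * (1 - α))) ∧
    psiHD a Ψ (fun t => h (Ψ t) * w (Ψ t)) α β x =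
      (∑' m : ℕ, genBinom α m * iteratedDeriv m h (Ψ x) *
        psiHD a Ψ (fun y => psiI a Ψ (fun t => w (Ψ t)) (m : ℝ) y) α β x) +
      ∑' k : ℕ,
        genBinom (-((1 - β) * (1 - α))) k * psiI a Ψ (fun t => w (Ψ t)) ((1 - β) * (1 - α) + k) a *
          (iteratedDeriv k h (Ψ x) - iteratedDeriv k h (Ψ a)) *
          (Ψ x - Ψ a) ^ (-(α + (1 - β) * (1 - α))) / Gamma (β * (1 - α)) := by
  have hξ : 0 ≤ (1 - β) * (1 - α) := mul_nonneg (by linarith) (by linarith)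
  have hproduct : psiHD a Ψ (fun t => h (Ψ t) * w (Ψ t)) α β x =
      hilD (Ψ a) α β (fun u => h u * w u) (Ψ x) :=
    psiHD_eq_hilD hΨ hΨ' (fun _ _ => rfl) (differentiableOn_rlI hξ (hh.contDiff.mul hw)) hx
  have hfactor (m : ℕ) : psiHD a Ψ (fun y => psiI a Ψ (fun t => w (Ψ t)) m y) α β x =
      hilD (Ψ a) α β (rlI (Ψ a) m w) (Ψ x) :=
    psiHD_eq_hilD hΨ hΨ' (fun y hy => psiI_eq_rlI hΨ hΨ' (fun _ _ => rfl) hy m)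
      (differentiableOn_rlI_rlI_natCast hξ hw m) hx
  have hfirst := hasSum_hilD_mul hα hβ₀ hβ₁ hh hw (lt_of_deriv_pos_of_mem_Ioo hΨ hΨ' hx)
  have hsecond := ((hasSum_genBinom_mul_psiI_self hξ a Ψ (fun t => w (Ψ t))
    fun k => iteratedDeriv k h (Ψ x) - iteratedDeriv k h (Ψ a)).mul_right
      ((Ψ x - Ψ a) ^ (-(α + (1 - β) * (1 - α))))).div_const (Gamma (β * (1 - α)))
  simp only [← hfactor, ← hproduct] at hfirst
  refine ⟨hfirst.summable, hsecond.summable, ?_⟩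
  rw [hfirst.tsum_eq, hsecond.tsum_eq, psiI_self, rlI_self]
  split_ifs with hξ₀
  · rw [hξ₀, add_zero, show β * (1 - α) = 1 - α by linear_combination -hξ₀]
    simp only [iteratedDeriv_zero]
    ring
  · ring

/-- Leibniz Type Rule II for the Ψ-Hilfer fractional derivative; the
Ψ-Hilfer derivative of order `α - m` is the Ψ-Hilfer derivative of order `α` applied
to the Ψ-fractional integral of order `m`. -/
theorem leibniz_type_rule_II
    (a b : ℝ) (hab : a < b) (α β : ℝ)
    (hα0 : 0 < α) (hα1 : α < 1) (hβ0 : 0 < β) (hβ1 : β ≤ 1)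
    (Ψ : ℝ → ℝ)
    (hΨmono : StrictMonoOn Ψ (Set.Icc a b))
    (hΨC1 : ContDiffOn ℝ 1 Ψ (Set.Icc a b))
    (hΨpos : ∀ t ∈ Set.Icc a b, 0 < deriv Ψ t)
    (f g h w : ℝ → ℝ)
    (hf : f = fun t => h (Ψ t)) (hg : g = fun t => w (Ψ t))
    (hh : EntireReal h) (hw : EntireReal w)
    (x : ℝ) (hx : x ∈ Set.Ioo a b) :
    Summable (fun m : ℕ => genBinom α m * iteratedDeriv m h (Ψ x) *
        psiHD a Ψ (fun y => psiI a Ψ g (m : ℝ) y) α β x) ∧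
    Summable (fun k : ℕ =>
        genBinom (-((1 - β) * (1 - α))) k * psiI a Ψ g ((1 - β) * (1 - α) + k) a *
          (iteratedDeriv k h (Ψ x) - iteratedDeriv k h (Ψ a)) *
          (Ψ x - Ψ a) ^ (-(α + (1 - β) * (1 - α))) / Real.Gamma (β * (1 - α))) ∧
    psiHD a Ψ (fun t => f t * g t) α β x =
      (∑' m : ℕ, genBinom α m * iteratedDeriv m h (Ψ x) *
        psiHD a Ψ (fun y => psiI a Ψ g (m : ℝ) y) α β x) +
      ∑' k : ℕ,
        genBinom (-((1 - β) * (1 - α))) k * psiI a Ψ g ((1 - β) * (1 - α) + k) a *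
          (iteratedDeriv k h (Ψ x) - iteratedDeriv k h (Ψ a)) *
          (Ψ x - Ψ a) ^ (-(α + (1 - β) * (1 - α))) / Real.Gamma (β * (1 - α)) := by
  subst hf hg
  exact leibniz_type_rule_II_general hα1 hβ0 hβ1 (hΨC1.continuousOn.mono Ico_subset_Icc_self)
    (fun t ht => hΨpos t (Ioo_subset_Icc_self ht)) hh hw.contDiff hx
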